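/- Let G be a group and let a_1, a_2, a_3, b_1, b_2, b_3, b be elements of G. Assume: (i) a_1, a_2, a_3 pairwise commute; (ii) for each i taken modulo 3, b a_i b_i = a_i b_i a_{i+1} = b_i a_{i+1} b = a_{i+1} b a_i; and (iii) the product z = a_1³ b_1 a_2³ b_2 a_3³ b_3 is central in G. Then the 12-tuple (a_1, a_1, a_1, b_1, a_2, a_2, a_2, b_2, a_3, a_3, a_3, b_3) is Hurwitz equivalent to the 12-tuple (a_1, a_2, a_3, b, a_1, a_2, a_3, b, a_1, a_2, a_3, b); in particular a_1³ b_1 a_2³ b_2 a_3³ b_3 = (a_1 a_2 a_3 b)³ in G. -/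

import Mathlib

/-- An elementary Hurwitz move on a tuple of elements of a group: replace an adjacent
pair `(a, b)` by `(a * b * a⁻¹, a)` or by `(b, b⁻¹ * a * b)`. -/
inductive HurwitzMove {G : Type*} [Group G] : List G → List G → Prop
  | slideLeft (l₁ l₂ : List G) (a b : G) :
      HurwitzMove (l₁ ++ a :: b :: l₂) (l₁ ++ (a * b * a⁻¹) :: a :: l₂)
  | slideRight (l₁ l₂ : List G) (a b : G) :
      HurwitzMove (l₁ ++ a :: b :: l₂) (l₁ ++ b :: (b⁻¹ * a * b) :: l₂)

/-- Two tuples are Hurwitz equivalent if one is obtained from the other by a finite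
sequence of elementary Hurwitz moves. -/
def HurwitzEquiv {G : Type*} [Group G] : List G → List G → Prop :=
  Relation.ReflTransGen HurwitzMove

/-!
If `x` and `y` commute and `x c y = y b x`, then `(x, c, y)` and `(y, b, x)` are Hurwitz equivalent.
Read cyclically, the tuple `(a₁, a₁, a₁, b₁, a₂, a₂, a₂, b₂, a₃, a₃, a₃, b₃)` contains the three
disjoint triples `(aᵢ, bᵢ, aᵢ₊₁)`; exchanging each for `(aᵢ₊₁, b, aᵢ)` leaves between consecutive
`b`s one copy of each `aⱼ`, in some order. The third triple straddles the two ends of the tuple: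
an entry may be carried around an end because it commutes with the total product.
-/

namespace HurwitzMove

variable {G : Type*} [Group G] {l l' : List G}

theorem symm (h : HurwitzMove l l') : HurwitzMove l' l := by
  cases h with
  | slideLeft l₁ l₂ a b => simpa [mul_assoc] using slideRight l₁ l₂ (a * b * a⁻¹) a
  | slideRight l₁ l₂ a b => simpa [mul_assoc] using slideLeft l₁ l₂ b (b⁻¹ * a * b)

theorem append_append (p s : List G) (h : HurwitzMove l l') :
    HurwitzMove (p ++ l ++ s) (p ++ l' ++ s) := by
  cases h with
  | slideLeft l₁ l₂ a b => simpa using slideLeft (p ++ l₁) (l₂ ++ s) a b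
  | slideRight l₁ l₂ a b => simpa using slideRight (p ++ l₁) (l₂ ++ s) a b

theorem prod_eq (h : HurwitzMove l l') : l.prod = l'.prod := by
  cases h <;> simp [mul_assoc]

instance : Std.Symm (HurwitzMove (G := G)) :=
  ⟨fun _ _ ↦ symm⟩

end HurwitzMove

namespace HurwitzEquiv

variable {G : Type*} [Group G] {l l' l'' m m' : List G} {x y : G}

theorem refl (l : List G) : HurwitzEquiv l l :=
  Relation.ReflTransGen.refl

theorem trans (h : HurwitzEquiv l l') (h' : HurwitzEquiv l' l'') : HurwitzEquiv l l'' :=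
  Relation.ReflTransGen.trans h h'

instance : Trans (HurwitzEquiv (G := G)) HurwitzEquiv HurwitzEquiv :=
  ⟨trans⟩

theorem symm (h : HurwitzEquiv l l') : HurwitzEquiv l' l :=
  Relation.ReflTransGen.stdSymm.symm _ _ h

theorem prod_eq (h : HurwitzEquiv l l') : l.prod = l'.prod := by
  induction h with
  | refl => rfl
  | tail _ hmove ih => exact ih.trans hmove.prod_eq

theorem append_append (p s : List G) (h : HurwitzEquiv l l') :
    HurwitzEquiv (p ++ l ++ s) (p ++ l' ++ s) :=
  Relation.ReflTransGen.lift (fun t ↦ p ++ t ++ s)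
    (fun _ _ hmove ↦ hmove.append_append p s) _ _ h

theorem append (hl : HurwitzEquiv l l') (hm : HurwitzEquiv m m') :
    HurwitzEquiv (l ++ m) (l' ++ m') :=
  calc
    HurwitzEquiv (l ++ m) (l' ++ m) := by simpa using hl.append_append [] m
    HurwitzEquiv _ (l' ++ m') := by simpa using hm.append_append l' []

theorem cons (x : G) (h : HurwitzEquiv l l') : HurwitzEquiv (x :: l) (x :: l') :=
  (refl [x]).append h

theorem swap (h : Commute x y) (l : List G) : HurwitzEquiv (x :: y :: l) (y :: x :: l) := by
  have hmove := HurwitzMove.slideLeft [] l x y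
  rw [h.mul_inv_cancel] at hmove
  exact .single hmove

theorem of_perm (h : l.Perm l') (hl : l.Pairwise Commute) : HurwitzEquiv l l' := by
  induction h with
  | nil => exact refl []
  | cons x _ ih => exact (ih hl.of_cons).cons x
  | swap x y l => exact swap (List.rel_of_pairwise_cons hl List.mem_cons_self) l
  | trans h _ ih ih' => exact (ih hl).trans (ih' (h.pairwise hl fun hxy ↦ hxy.symm))

theorem swap_ends {b c : G} (hxy : Commute x y) (h : x * c * y = y * b * x) :
    HurwitzEquiv [x, c, y] [y, b, x] := by
  have hconj : x * c * x⁻¹ = y * b * y⁻¹ := by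
    rw [mul_inv_eq_iff_eq_mul, eq_mul_inv_of_mul_eq h, mul_assoc _ x, mul_assoc _ y⁻¹,
      hxy.inv_right.eq]
  calc
    HurwitzEquiv [x, c, y] [x * c * x⁻¹, x, y] := .single (.slideLeft [] [y] x c)
    HurwitzEquiv _ [y * b * y⁻¹, y, x] := hconj ▸ (swap hxy []).cons _
    HurwitzEquiv _ [y, b, x] := symm (.single (.slideLeft [] [x] y b))

theorem cons_conj (x : G) (l : List G) :
    HurwitzEquiv (x :: l) (l ++ [l.prod⁻¹ * x * l.prod]) := by
  induction l generalizing x with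
  | nil => simpa using refl [x]
  | cons y l ih =>
    calc
      HurwitzEquiv (x :: y :: l) (y :: (y⁻¹ * x * y) :: l) := .single (.slideRight [] l x y)
      HurwitzEquiv _ (y :: (l ++ [l.prod⁻¹ * (y⁻¹ * x * y) * l.prod])) := (ih _).cons y
      _ = y :: l ++ [(y :: l).prod⁻¹ * x * (y :: l).prod] := by simp [mul_assoc]

theorem rotate_of_commute (h : Commute x l.prod) : HurwitzEquiv (x :: l) (l ++ [x]) := by
  have hconj := cons_conj x l
  rwa [h.symm.inv_mul_cancel] at hconj

theorem rotate_left (h : Commute x (x :: l).prod) : HurwitzEquiv (x :: l) (l ++ [x]) := by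
  have hl : Commute x (x⁻¹ * (x :: l).prod) := (Commute.refl x).inv_right.mul_right h
  rw [List.prod_cons, inv_mul_cancel_left] at hl
  exact rotate_of_commute hl

theorem rotate_right (h : Commute x (l ++ [x]).prod) : HurwitzEquiv (l ++ [x]) (x :: l) := by
  have hl : Commute x ((l ++ [x]).prod * x⁻¹) := h.mul_right (Commute.refl x).inv_right
  rw [List.prod_append, List.prod_singleton, mul_inv_cancel_right] at hl
  exact symm (rotate_of_commute hl)

end HurwitzEquiv

theorem hurwitzEquiv_star_relation_general {G : Type*} [Group G] {a₁ a₂ a₃ b₁ b₂ b₃ b : G}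
    (hc12 : Commute a₁ a₂) (hc13 : Commute a₁ a₃) (hc23 : Commute a₂ a₃)
    (h1 : a₁ * b₁ * a₂ = a₂ * b * a₁) (h2 : a₂ * b₂ * a₃ = a₃ * b * a₂)
    (h3 : a₃ * b₃ * a₁ = a₁ * b * a₃)
    (hz₁ : Commute a₁ (a₁ ^ 3 * b₁ * a₂ ^ 3 * b₂ * a₃ ^ 3 * b₃))
    (hz₃ : Commute a₃ (a₁ ^ 3 * b₁ * a₂ ^ 3 * b₂ * a₃ ^ 3 * b₃)) :
    HurwitzEquiv
      [a₁, a₁, a₁, b₁, a₂, a₂, a₂, b₂, a₃, a₃, a₃, b₃]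
      [a₁, a₂, a₃, b, a₁, a₂, a₃, b, a₁, a₂, a₃, b] ∧
    a₁ ^ 3 * b₁ * a₂ ^ 3 * b₂ * a₃ ^ 3 * b₃ = (a₁ * a₂ * a₃ * b) ^ 3 := by
  have hprod : [a₁, a₁, a₁, b₁, a₂, a₂, a₂, b₂, a₃, a₃, a₃, b₃].prod =
      a₁ ^ 3 * b₁ * a₂ ^ 3 * b₂ * a₃ ^ 3 * b₃ := by
    simp [pow_succ, mul_assoc]
  have exchanged : HurwitzEquiv [a₁, a₁, a₁, b₁, a₂, a₂, a₂, b₂, a₃, a₃, a₃, b₃]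
      [a₁, a₂, b, a₁, a₂, a₃, b, a₂, a₃, a₁, b, a₃] := calc
    HurwitzEquiv _ [a₁, a₁, b₁, a₂, a₂, a₂, b₂, a₃, a₃, a₃, b₃, a₁] :=
      .rotate_left (hprod ▸ hz₁)
    HurwitzEquiv _ _ :=
      .cons a₁ <| (HurwitzEquiv.swap_ends hc12 h1).append <|
      .cons a₂ <| (HurwitzEquiv.swap_ends hc23 h2).append <|
      .cons a₃ <| HurwitzEquiv.swap_ends hc13.symm h3
  have sort₃₁₂ : HurwitzEquiv [a₃, a₁, a₂] [a₁, a₂, a₃] :=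
    .of_perm (List.perm_append_comm (l₁ := [a₃])) (by simp [hc12, hc13.symm, hc23.symm])
  have sort₂₃₁ : HurwitzEquiv [a₂, a₃, a₁] [a₁, a₂, a₃] :=
    .of_perm (List.perm_append_comm (l₁ := [a₂, a₃])) (by simp [hc12.symm, hc13.symm, hc23])
  have star : HurwitzEquiv [a₁, a₁, a₁, b₁, a₂, a₂, a₂, b₂, a₃, a₃, a₃, b₃]
      [a₁, a₂, a₃, b, a₁, a₂, a₃, b, a₁, a₂, a₃, b] := calc
    HurwitzEquiv _ [a₁, a₂, b, a₁, a₂, a₃, b, a₂, a₃, a₁, b, a₃] := exchanged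
    HurwitzEquiv _ [a₃, a₁, a₂, b, a₁, a₂, a₃, b, a₂, a₃, a₁, b] :=
      .rotate_right (l := [a₁, a₂, b, a₁, a₂, a₃, b, a₂, a₃, a₁, b])
        (exchanged.prod_eq ▸ hprod ▸ hz₃)
    HurwitzEquiv _ _ :=
      sort₃₁₂.append <| (HurwitzEquiv.refl [b, a₁, a₂, a₃, b]).append <| sort₂₃₁.append <| .refl [b]
  exact ⟨star, by simpa [pow_succ, mul_assoc] using star.prod_eq⟩

/-- The algebraic content of the identification of the 3-holed torus relation
`N₃ = ∂₃` with the star relation `(a₁ a₂ a₃ b)³ = ∂₃`. -/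
theorem hurwitzEquiv_star_relation {G : Type*} [Group G]
    (a₁ a₂ a₃ b₁ b₂ b₃ b : G)
    (hc12 : Commute a₁ a₂) (hc13 : Commute a₁ a₃) (hc23 : Commute a₂ a₃)
    (h1 : b * a₁ * b₁ = a₁ * b₁ * a₂ ∧ a₁ * b₁ * a₂ = b₁ * a₂ * b ∧
      b₁ * a₂ * b = a₂ * b * a₁)
    (h2 : b * a₂ * b₂ = a₂ * b₂ * a₃ ∧ a₂ * b₂ * a₃ = b₂ * a₃ * b ∧
      b₂ * a₃ * b = a₃ * b * a₂)
    (h3 : b * a₃ * b₃ = a₃ * b₃ * a₁ ∧ a₃ * b₃ * a₁ = b₃ * a₁ * b ∧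
      b₃ * a₁ * b = a₁ * b * a₃)
    (hz : a₁ ^ 3 * b₁ * a₂ ^ 3 * b₂ * a₃ ^ 3 * b₃ ∈ Subgroup.center G) :
    HurwitzEquiv
      [a₁, a₁, a₁, b₁, a₂, a₂, a₂, b₂, a₃, a₃, a₃, b₃]
      [a₁, a₂, a₃, b, a₁, a₂, a₃, b, a₁, a₂, a₃, b] ∧
    a₁ ^ 3 * b₁ * a₂ ^ 3 * b₂ * a₃ ^ 3 * b₃ = (a₁ * a₂ * a₃ * b) ^ 3 := by
  have hcomm (g : G) : Commute g (a₁ ^ 3 * b₁ * a₂ ^ 3 * b₂ * a₃ ^ 3 * b₃) :=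
    Subgroup.mem_center_iff.mp hz g
  exact hurwitzEquiv_star_relation_general hc12 hc13 hc23 (h1.2.1.trans h1.2.2)
    (h2.2.1.trans h2.2.2) (h3.2.1.trans h3.2.2) (hcomm a₁) (hcomm a₃)
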